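/- The price of stability of exact mixed Nash equilibria in liquid democracy games is zero: for every γ > 0 there exists a liquid democracy game such that every mixed-strategy Nash equilibrium x satisfies SW(x) ≤ γ · OPT. -/

import Mathlib

/-!
The theorem is witnessed by a three-agent game with `OPT ≥ 1`, so that the bound is not obtained
from a degenerate game of zero welfare. Let `0 < ε ≤ 1` with `2 * ε ≤ γ`. Agents `0` and `1` value
guru `1` at `ε`, agent `2` values guru `0` at `1`, and all other utilities are `0`.

If agent `0` votes and agent `2` delegates to her, the welfare is at least `1`. In a Nash
equilibrium agent `1` votes with probability one, since this guarantees her maximal utility `ε`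
and nothing else achieves it. Hence agent `0` can secure her maximal utility `ε` by
delegating to agent `1`, so in equilibrium her guru is almost surely agent `1` and she never votes.
Agent `2` therefore gets `0`, and the welfare is at most `2 * ε ≤ γ ≤ γ * OPT`.

Almost sure events are expressed through the support of `prob x`: `support_of_le_util` says that an
agent whose expected utility reaches the maximum `c` of her pure utilities gets exactly `c` in each
pure profile of positive probability.
-/

open Finset

/-- The guru of agent `i` under pure profile `s` (where `s i = some j` means `i`
delegates to `j`, with `s i = some i` meaning `i` votes herself, and `s i = none`
meaning `i` abstains): follow delegation arcs for `n` steps; the endpoint is the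
guru provided it votes itself. -/
def guru {n : ℕ} (s : Fin n → Option (Fin n)) (i : Fin n) : Option (Fin n) :=
  ((fun o => Option.bind o s)^[n] (some i)).bind
    (fun j => if s j = some j then some j else none)

/-- Utility of agent `i` in the pure profile `s`: `u i (g i)` if the guru exists, else `0`. -/
def pureUtil {n : ℕ} (u : Fin n → Fin n → ℝ) (s : Fin n → Option (Fin n)) (i : Fin n) : ℝ :=
  (guru s i).elim 0 (u i)

/-- A mixed strategy for a single agent: nonnegative, total probability at most one
(the residual probability is abstention). -/
def IsStrat {n : ℕ} (y : Fin n → ℝ) : Prop := (∀ j, 0 ≤ y j) ∧ (∑ j, y j) ≤ 1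

/-- A mixed strategy profile. -/
def IsMixed {n : ℕ} (x : Fin n → Fin n → ℝ) : Prop := ∀ i, IsStrat (x i)

/-- Probability that the independent randomization `x` produces the pure profile `s`. -/
def prob {n : ℕ} (x : Fin n → Fin n → ℝ) (s : Fin n → Option (Fin n)) : ℝ :=
  ∏ i, (s i).elim (1 - ∑ j, x i j) (x i)

/-- Expected utility of agent `i` under the mixed profile `x`. -/
def util {n : ℕ} (u x : Fin n → Fin n → ℝ) (i : Fin n) : ℝ :=
  ∑ s : Fin n → Option (Fin n), prob x s * pureUtil u s i

/-- Expected social welfare of the mixed profile `x`. -/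
def SW {n : ℕ} (u x : Fin n → Fin n → ℝ) : ℝ := ∑ i, util u x i

/-- The set of social-welfare values achievable by mixed profiles; `OPT` is its greatest element. -/
def SWvals {n : ℕ} (u : Fin n → Fin n → ℝ) : Set ℝ :=
  {w | ∃ x, IsMixed x ∧ w = SW u x}

/-- `x` is an `ε`-Nash equilibrium. -/
def EpsNash {n : ℕ} (u : Fin n → Fin n → ℝ) (ε : ℝ) (x : Fin n → Fin n → ℝ) : Prop :=
  ∀ i y, IsStrat y → util u x i ≥ (1 - ε) * util u (Function.update x i y) i

/-- `x` is an (exact, mixed) Nash equilibrium. -/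
def NashEq {n : ℕ} (u x : Fin n → Fin n → ℝ) : Prop :=
  ∀ i y, IsStrat y → util u x i ≥ util u (Function.update x i y) i

/-! ### Mixed profiles as distributions over pure profiles -/

lemma elim_nonneg {n : ℕ} {x : Fin n → Fin n → ℝ} (hx : IsMixed x) (i : Fin n)
    (o : Option (Fin n)) : 0 ≤ o.elim (1 - ∑ j, x i j) (x i) := by
  cases o with
  | none => simpa using (hx i).2
  | some j => simpa using (hx i).1 j

lemma prob_nonneg {n : ℕ} {x : Fin n → Fin n → ℝ} (hx : IsMixed x)
    (s : Fin n → Option (Fin n)) : 0 ≤ prob x s :=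
  Finset.prod_nonneg fun i _ => elim_nonneg hx i (s i)

lemma sum_prob {n : ℕ} (x : Fin n → Fin n → ℝ) : ∑ s, prob x s = 1 := by
  unfold prob
  rw [← Fintype.prod_sum fun i (o : Option (Fin n)) => o.elim (1 - ∑ j, x i j) (x i)]
  simp [Fintype.sum_option]

/-- If every pure profile in the support of `x` gives agent `i` utility `c`, so does `x`. -/
lemma util_eq_of_support {n : ℕ} {u x : Fin n → Fin n → ℝ} {i : Fin n} {c : ℝ}
    (h : ∀ s, prob x s ≠ 0 → pureUtil u s i = c) : util u x i = c := by
  have : util u x i = ∑ s, prob x s * c := by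
    refine Finset.sum_congr rfl fun s _ => ?_
    by_cases hs : prob x s = 0
    · simp [hs]
    · rw [h s hs]
  rw [this, ← Finset.sum_mul, sum_prob, one_mul]

lemma util_le {n : ℕ} {u x : Fin n → Fin n → ℝ} (hx : IsMixed x) {i : Fin n} {c : ℝ}
    (h : ∀ s, pureUtil u s i ≤ c) : util u x i ≤ c := by
  calc util u x i ≤ ∑ s, prob x s * c :=
        Finset.sum_le_sum fun s _ => mul_le_mul_of_nonneg_left (h s) (prob_nonneg hx s)
    _ = c := by rw [← Finset.sum_mul, sum_prob, one_mul]

/-- An expectation that reaches the maximum `c` of the random variable forces the value `c`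
throughout the support. -/
lemma support_of_le_util {n : ℕ} {u x : Fin n → Fin n → ℝ} (hx : IsMixed x) {i : Fin n} {c : ℝ}
    (h : ∀ s, pureUtil u s i ≤ c) (hc : c ≤ util u x i) (s : Fin n → Option (Fin n))
    (hs : prob x s ≠ 0) : pureUtil u s i = c := by
  have hnn : ∀ t ∈ Finset.univ, 0 ≤ prob x t * (c - pureUtil u t i) := fun t _ =>
    mul_nonneg (prob_nonneg hx t) (sub_nonneg.2 (h t))
  have hsum : ∑ t, prob x t * (c - pureUtil u t i) = c - util u x i := by
    simp only [mul_sub, Finset.sum_sub_distrib, ← Finset.sum_mul, sum_prob, one_mul, util]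
  have hz : ∑ t, prob x t * (c - pureUtil u t i) = 0 :=
    le_antisymm (by linarith) (Finset.sum_nonneg hnn)
  have := (Finset.sum_eq_zero_iff_of_nonneg hnn).1 hz s (Finset.mem_univ s)
  have := (mul_eq_zero.1 this).resolve_left hs
  linarith

lemma exists_support {n : ℕ} (x : Fin n → Fin n → ℝ) : ∃ s, prob x s ≠ 0 := by
  by_contra! h
  have := sum_prob x
  simp [h] at this

lemma elim_ne_zero {n : ℕ} {x : Fin n → Fin n → ℝ} {s : Fin n → Option (Fin n)}
    (hs : prob x s ≠ 0) (i : Fin n) : (s i).elim (1 - ∑ j, x i j) (x i) ≠ 0 :=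
  Finset.prod_ne_zero_iff.1 hs i (Finset.mem_univ i)

/-! ### Deterministic strategies -/

lemma isStrat_single {n : ℕ} (j : Fin n) : IsStrat (Pi.single j (1 : ℝ)) := by
  constructor
  · intro k
    by_cases h : k = j
    · subst h; simp
    · simp [h]
  · simp

lemma eq_some_of_single {n : ℕ} {x : Fin n → Fin n → ℝ} {s : Fin n → Option (Fin n)}
    {i j : Fin n} (hi : x i = Pi.single j 1) (hs : prob x s ≠ 0) : s i = some j := by
  have h := elim_ne_zero hs i
  rw [hi] at h
  cases ho : s i with
  | none => simp [ho] at h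
  | some k =>
    by_cases hk : k = j
    · rw [hk]
    · simp [ho, hk] at h

/-- By independence, an action that agent `i` plays surely under `x` is also played surely after
another agent changes her strategy. -/
lemma eq_some_of_update {n : ℕ} {x : Fin n → Fin n → ℝ} {i k j : Fin n} (hik : i ≠ k)
    (y : Fin n → ℝ) (h : ∀ s, prob x s ≠ 0 → s i = some j) (s : Fin n → Option (Fin n))
    (hs : prob (Function.update x k y) s ≠ 0) : s i = some j := by
  -- Transplant the action `s i` into a profile of the support of `x`.
  obtain ⟨t, ht⟩ := exists_support x
  have hmem : prob x (Function.update t i (s i)) ≠ 0 := by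
    refine Finset.prod_ne_zero_iff.2 fun l _ => ?_
    by_cases hl : l = i
    · subst hl
      simpa [hik] using elim_ne_zero hs l
    · simpa [hl] using elim_ne_zero ht l
  simpa using h _ hmem

/-! ### Gurus -/

lemma vote_of_guru {n : ℕ} {s : Fin n → Option (Fin n)} {i j : Fin n}
    (h : guru s i = some j) : s j = some j := by
  unfold guru at h
  obtain ⟨k, -, hk⟩ := Option.bind_eq_some_iff.1 h
  split_ifs at hk with hv
  · cases hk
    exact hv

lemma guru_of_delegate {s : Fin 3 → Option (Fin 3)} {i j : Fin 3} (hi : s i = some j)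
    (hj : s j = some j) : guru s i = some j := by
  simp [guru, hi, hj]

/-! ### The three-agent game -/

/-- Agents `0` and `1` value guru `1` at `ε`, agent `2` values guru `0` at `1`, and every other
utility is `0`. -/
def gameU (ε : ℝ) (i j : Fin 3) : ℝ :=
  if i = 2 then (if j = 0 then 1 else 0) else (if j = 1 then ε else 0)

lemma pureUtil_gameU_two (ε : ℝ) (s : Fin 3 → Option (Fin 3)) :
    pureUtil (gameU ε) s 2 = if guru s 2 = some 0 then 1 else 0 := by
  unfold pureUtil
  cases guru s 2 <;> simp [gameU]

lemma pureUtil_gameU_of_ne (ε : ℝ) (s : Fin 3 → Option (Fin 3)) {i : Fin 3} (hi : i ≠ 2) :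
    pureUtil (gameU ε) s i = if guru s i = some 1 then ε else 0 := by
  unfold pureUtil
  cases guru s i <;> simp [gameU, hi]

lemma one_le_opt {ε OPT : ℝ} (hε : 0 < ε) (h : IsGreatest (SWvals (gameU ε)) OPT) :
    1 ≤ OPT := by
  -- All agents choose agent `0` surely.
  let x : Fin 3 → Fin 3 → ℝ := fun _ => Pi.single 0 1
  have hx : IsMixed x := fun _ => isStrat_single 0
  have hnn : ∀ i, i ≠ 2 → 0 ≤ util (gameU ε) x i := fun i hi => by
    refine Finset.sum_nonneg fun s _ => mul_nonneg (prob_nonneg hx s) ?_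
    rw [pureUtil_gameU_of_ne ε s hi]
    split_ifs <;> linarith
  have h2 : util (gameU ε) x 2 = 1 := util_eq_of_support fun s hs => by
    rw [pureUtil_gameU_two, if_pos]
    exact guru_of_delegate (eq_some_of_single rfl hs) (eq_some_of_single rfl hs)
  have hSW : 1 ≤ SW (gameU ε) x := by
    have h0 := hnn 0 (by decide)
    have h1 := hnn 1 (by decide)
    rw [SW, Fin.sum_univ_three]
    linarith
  exact hSW.trans (h.2 ⟨x, hx, rfl⟩)

lemma SW_le_of_nash {ε : ℝ} (hε : 0 < ε) {x : Fin 3 → Fin 3 → ℝ} (hx : IsMixed x)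
    (hN : NashEq (gameU ε) x) : SW (gameU ε) x ≤ 2 * ε := by
  have hle : ∀ i, i ≠ 2 → ∀ s, pureUtil (gameU ε) s i ≤ ε := fun i hi s => by
    rw [pureUtil_gameU_of_ne ε s hi]
    split_ifs <;> linarith
  -- An agent whose deviation to `1` yields `ε` surely has guru `1` throughout the support.
  have key : ∀ i, i ≠ 2 →
      (∀ s, prob (Function.update x i (Pi.single 1 1)) s ≠ 0 → s 1 = some 1) →
      ∀ s, prob x s ≠ 0 → guru s i = some 1 := by
    intro i hi hdev s hs
    have hu : util (gameU ε) (Function.update x i (Pi.single 1 1)) i = ε :=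
      util_eq_of_support fun t ht => by
        rw [pureUtil_gameU_of_ne ε t hi, if_pos]
        exact guru_of_delegate (eq_some_of_single (by simp) ht) (hdev t ht)
    have hge : ε ≤ util (gameU ε) x i := hu.ge.trans (hN i _ (isStrat_single 1))
    have := support_of_le_util hx (hle i hi) hge s hs
    rw [pureUtil_gameU_of_ne ε s hi] at this
    by_contra hg
    rw [if_neg hg] at this
    linarith
  have hB : ∀ s, prob x s ≠ 0 → s 1 = some 1 := fun s hs =>
    vote_of_guru (key 1 (by decide) (fun t ht => eq_some_of_single (by simp) ht) s hs)
  have hA : ∀ s, prob x s ≠ 0 → guru s 0 = some 1 :=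
    key 0 (by decide) (eq_some_of_update (by decide) _ hB)
  have hC : util (gameU ε) x 2 = 0 := util_eq_of_support fun s hs => by
    rw [pureUtil_gameU_two, if_neg]
    intro hg
    -- Agent `0` would vote, hence be her own guru.
    have h0 := vote_of_guru hg
    have := (guru_of_delegate h0 h0).symm.trans (hA s hs)
    simp at this
  have h0 := util_le hx (hle 0 (by decide))
  have h1 := util_le hx (hle 1 (by decide))
  rw [SW, Fin.sum_univ_three, hC]
  linarith

/-- The price of stability of exact mixed Nash equilibria is zero: for every γ > 0
there is a liquid democracy game in which every mixed Nash equilibrium x has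
SW(x) ≤ γ · OPT. -/
theorem stmt2 (γ : ℝ) (hγ : 0 < γ) :
    ∃ (n : ℕ) (u : Fin n → Fin n → ℝ),
      (∀ i j, 0 ≤ u i j ∧ u i j ≤ 1) ∧
      ∀ OPT : ℝ, IsGreatest (SWvals u) OPT →
        ∀ x, IsMixed x → NashEq u x → SW u x ≤ γ * OPT := by
  have hε : 0 < min (γ / 2) 1 := lt_min (by linarith) one_pos
  have hε1 : min (γ / 2) 1 ≤ 1 := min_le_right _ _
  have hεγ : min (γ / 2) 1 ≤ γ / 2 := min_le_left _ _
  refine ⟨3, gameU (min (γ / 2) 1), fun i j => ?_, fun OPT hOPT x hx hN => ?_⟩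
  · unfold gameU
    split_ifs <;> constructor <;> linarith
  · have h1 := one_le_opt hε hOPT
    have h2 := SW_le_of_nash hε hx hN
    nlinarith
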